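/- arXiv:2401.08065 — 2 statements merged into one kernel-verified Lean document; each statement's English description precedes it below -/
import Mathlib

section
/- Let ρ = |ψ⟩⟨ψ| be an n-qubit pure state and S ⊆ Fin n nonempty with |S| = s. Fix a bitstring z : S → Fin 2 and let U = ⊗_{i∈S} U_i be a product of independent Haar-random elements of U(2), with P_U(z) = tr(U ρ U† |z⟩⟨z|). Then E_U[P_U(z)³] = 4^{−s} · tr( ρ⊗ρ⊗ρ · ∏_{i∈S} Π_{sym,3}^i ) ≤ 4^{−s}, where Π_{sym,3} = (1/6) Σ_{σ ∈ S₃} R_σ is the projector onto the symmetric subspace of (C²)^{⊗3} (R_σ being the operator permuting the three tensor factors according to σ) and Π_{sym,3}^i acts as Π_{sym,3} on the triple of i-th qubits of the three copies and as the identity elsewhere. Consequently Σ_{z ∈ {0,1}^S} E_U[P_U(z)³] ≤ 2^{−s}. -/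
open Matrix MeasureTheory
open scoped BigOperators ComplexConjugate Kronecker

/-- `n`-qubit operators: matrices indexed by functions `Fin n → Fin 2`. -/
abbrev QMat (n : ℕ) : Type := Matrix (Fin n → Fin 2) (Fin n → Fin 2) ℂ

/-- Combine an assignment on `α` and one on its complement into a full index. -/
noncomputable def embedIdx {n : ℕ} (α : Finset (Fin n)) (i : {x : Fin n // x ∈ α} → Fin 2)
    (k : {x : Fin n // x ∉ α} → Fin 2) : Fin n → Fin 2 :=
  fun x => if h : x ∈ α then i ⟨x, h⟩ else k ⟨x, h⟩

/-- The reduced density matrix on the qubits in `α` (partial trace over the rest). -/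
noncomputable def reduced {n : ℕ} (ρ : QMat n) (α : Finset (Fin n)) :
    Matrix ({x : Fin n // x ∈ α} → Fin 2) ({x : Fin n // x ∈ α} → Fin 2) ℂ :=
  fun i j => ∑ k : ({x : Fin n // x ∉ α} → Fin 2), ρ (embedIdx α i k) (embedIdx α j k)

/-- The concentratable entanglement `C_ψ(S) = 1 - 2^{-|S|} ∑_{α ⊆ S} tr(ρ_α²)`. -/
noncomputable def CE {n : ℕ} (ρ : QMat n) (S : Finset (Fin n)) : ℝ :=
  1 - (1 / 2 : ℝ) ^ S.card *
    ∑ α ∈ S.powerset, (Matrix.trace (reduced ρ α * reduced ρ α)).re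

/-- Tensor product of single-qubit operators on the qubits in `S`, identity elsewhere. -/
noncomputable def localOp {n : ℕ} (S : Finset (Fin n))
    (V : {i : Fin n // i ∈ S} → Matrix (Fin 2) (Fin 2) ℂ) : QMat n :=
  fun x y => ∏ i : Fin n,
    if h : i ∈ S then V ⟨i, h⟩ (x i) (y i)
    else (if x i = y i then 1 else 0)

/-- Projector onto computational basis state `z` on the qubits in `S`, identity elsewhere. -/
noncomputable def projZ {n : ℕ} (S : Finset (Fin n)) (z : {i : Fin n // i ∈ S} → Fin 2) : QMat n :=
  fun x y => ∏ i : Fin n,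
    if h : i ∈ S then (if x i = z ⟨i, h⟩ ∧ y i = z ⟨i, h⟩ then 1 else 0)
    else (if x i = y i then 1 else 0)

noncomputable instance : MeasurableSpace (Matrix.unitaryGroup (Fin 2) ℂ) := borel _
instance : BorelSpace (Matrix.unitaryGroup (Fin 2) ℂ) := ⟨rfl⟩

/-- The Born probability `P_U(z) = tr(U ρ U† |z⟩⟨z|)` of outcome `z` after the local
randomized measurement given by the single-qubit unitaries `V i`, `i ∈ S`. -/
noncomputable def born {n : ℕ} (ρ : QMat n) (S : Finset (Fin n))
    (V : {i : Fin n // i ∈ S} → Matrix.unitaryGroup (Fin 2) ℂ)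
    (z : {i : Fin n // i ∈ S} → Fin 2) : ℝ :=
  (Matrix.trace (localOp S (fun i => (V i : Matrix (Fin 2) (Fin 2) ℂ)) * ρ *
      (localOp S (fun i => (V i : Matrix (Fin 2) (Fin 2) ℂ)))ᴴ * projZ S z)).re

/-- The three-fold tensor copy `ρ ⊗ ρ ⊗ ρ`, indexed by triples of basis labels. -/
noncomputable def rho3 {n : ℕ} (ρ : QMat n) :
    Matrix (Fin 3 → (Fin n → Fin 2)) (Fin 3 → (Fin n → Fin 2)) ℂ :=
  fun x y => ∏ c : Fin 3, ρ (x c) (y c)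

/-- The operator permuting the three tensor factors of `(ℂ²)^{⊗3}` according to `σ`. -/
noncomputable def permOp3 (σ : Equiv.Perm (Fin 3)) : Matrix (Fin 3 → Fin 2) (Fin 3 → Fin 2) ℂ :=
  fun a b => if ∀ c, a c = b (σ c) then 1 else 0

/-- The projector `Π_{sym,3} = (1/6) ∑_{σ ∈ S₃} R_σ` onto the symmetric subspace of `(ℂ²)^{⊗3}`. -/
noncomputable def sym3 : Matrix (Fin 3 → Fin 2) (Fin 3 → Fin 2) ℂ :=
  ((1 : ℂ) / 6) • ∑ σ : Equiv.Perm (Fin 3), permOp3 σ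

/-- `Π_{sym,3}^i`: `Π_{sym,3}` acting on the triple of `i`-th qubits of the three copies,
identity elsewhere. -/
noncomputable def symAt3 {n : ℕ} (i : Fin n) :
    Matrix (Fin 3 → (Fin n → Fin 2)) (Fin 3 → (Fin n → Fin 2)) ℂ :=
  fun x y => if ∀ (c : Fin 3) (j : Fin n), j ≠ i → x c j = y c j
    then sym3 (fun c => x c i) (fun c => y c i) else 0

/-- The product `∏_{i ∈ S} Π_{sym,3}^i` (the factors commute; we use the increasing order). -/
noncomputable def prodSym3 {n : ℕ} (S : Finset (Fin n)) :
    Matrix (Fin 3 → (Fin n → Fin 2)) (Fin 3 → (Fin n → Fin 2)) ℂ :=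
  ((S.sort (· ≤ ·)).map (fun i => symAt3 i)).prod

instance : CompactSpace (Matrix.unitaryGroup (Fin 2) ℂ) := by
  have hK : IsCompact {M : Matrix (Fin 2) (Fin 2) ℂ | ∀ i j, M i j ∈ Metric.closedBall (0 : ℂ) 1} := by
    have := isCompact_univ_pi (fun _ : Fin 2 => isCompact_univ_pi
      (fun _ : Fin 2 => isCompact_closedBall (0 : ℂ) 1))
    refine (congrArg IsCompact (Set.ext fun M => ?_)).mp this
    exact ⟨fun h i j => h i trivial j trivial, fun h i _ j _ => h i j⟩
  refine isCompact_iff_compactSpace.mp (hK.of_isClosed_subset isClosed_unitary ?_)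
  intro M hM i j
  simpa using entry_norm_bound_of_unitary hM i j

theorem integral_mul_right_unitaryGroup (μ : Measure (Matrix.unitaryGroup (Fin 2) ℂ))
    [μ.IsHaarMeasure] [IsProbabilityMeasure μ] {W : Matrix (Fin 2) (Fin 2) ℂ}
    (hW : W ∈ Matrix.unitaryGroup (Fin 2) ℂ) (f : Matrix (Fin 2) (Fin 2) ℂ → ℂ) :
    ∫ U : Matrix.unitaryGroup (Fin 2) ℂ, f ((U : Matrix (Fin 2) (Fin 2) ℂ) * W) ∂μ =
      ∫ U : Matrix.unitaryGroup (Fin 2) ℂ, f U ∂μ := by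
  have : μ.IsMulRightInvariant := ⟨fun g => by
    have : IsProbabilityMeasure (μ.map (· * g)) :=
      Measure.isProbabilityMeasure_map (continuous_mul_const g).aemeasurable
    have : (μ.map (· * g)).IsHaarMeasure := Measure.isHaarMeasure_map_mul_right μ g
    exact Measure.isHaarMeasure_eq_of_isProbabilityMeasure _ _⟩
  exact integral_mul_right_eq_self (μ := μ)
    (fun U : Matrix.unitaryGroup (Fin 2) ℂ => f (U : Matrix (Fin 2) (Fin 2) ℂ)) ⟨W, hW⟩

/-- The tensor product of a finite family of matrices, indexed by functions. -/
def piTensor {ι κ R : Type*} [Fintype ι] [CommSemiring R] (A : ι → Matrix κ κ R) :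
    Matrix (ι → κ) (ι → κ) R :=
  fun x y => ∏ i, A i (x i) (y i)

theorem piTensor_mul {ι κ R : Type*} [Fintype ι] [DecidableEq ι] [Fintype κ] [CommSemiring R]
    (A B : ι → Matrix κ κ R) :
    piTensor A * piTensor B = piTensor (fun i => A i * B i) := by
  ext x y
  simp only [piTensor, Matrix.mul_apply, Fintype.prod_sum, Finset.prod_mul_distrib]

theorem piTensor_conjTranspose {ι κ R : Type*} [Fintype ι] [CommSemiring R] [StarRing R]
    (A : ι → Matrix κ κ R) :
    (piTensor A)ᴴ = piTensor (fun i => (A i)ᴴ) := by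
  ext x y
  simp [piTensor, Matrix.conjTranspose_apply]

theorem piTensor_one {ι κ R : Type*} [Fintype ι] [DecidableEq κ] [CommSemiring R] :
    piTensor (fun _ : ι => (1 : Matrix κ κ R)) = 1 := by
  ext x y
  simp only [piTensor, Matrix.one_apply, funext_iff, Fintype.prod_ite_zero, Finset.prod_const_one]

/-- The monomial `α ^ a * β ^ b * conj α ^ c * conj β ^ d` in the row `(α, β)` of index `z`. -/
noncomputable def rowMonomial (z : Fin 2) (a b c d : ℕ) (U : Matrix (Fin 2) (Fin 2) ℂ) : ℂ :=
  U z 0 ^ a * U z 1 ^ b * (star (U z 0) ^ c * star (U z 1) ^ d)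

/-- The Haar expectation of `rowMonomial z a b c d`. -/
noncomputable def rowMoment (μ : Measure (Matrix.unitaryGroup (Fin 2) ℂ)) (z : Fin 2)
    (a b c d : ℕ) : ℂ :=
  ∫ U : Matrix.unitaryGroup (Fin 2) ℂ, rowMonomial z a b c d U ∂μ

theorem integrable_of_continuous (μ : Measure (Matrix.unitaryGroup (Fin 2) ℂ))
    [IsProbabilityMeasure μ] {f : Matrix.unitaryGroup (Fin 2) ℂ → ℂ} (hf : Continuous f) :
    Integrable f μ :=
  hf.integrable_of_hasCompactSupport (HasCompactSupport.of_compactSpace f)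

theorem continuous_rowMonomial (z : Fin 2) (a b c d : ℕ) :
    Continuous fun U : Matrix.unitaryGroup (Fin 2) ℂ => rowMonomial z a b c d U := by
  have h (j : Fin 2) : Continuous fun U : Matrix.unitaryGroup (Fin 2) ℂ =>
      (U : Matrix (Fin 2) (Fin 2) ℂ) z j :=
    continuous_subtype_val.matrix_elem z j
  exact (((h 0).pow a).mul ((h 1).pow b)).mul (((h 0).star.pow c).mul ((h 1).star.pow d))

section
variable (μ : Measure (Matrix.unitaryGroup (Fin 2) ℂ)) [μ.IsHaarMeasure] [IsProbabilityMeasure μ]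
  (z : Fin 2)

theorem rowMoment_swap (a b c d : ℕ) : rowMoment μ z a b c d = rowMoment μ z b a d c := by
  have hW : !![0, 1; 1, 0] ∈ Matrix.unitaryGroup (Fin 2) ℂ := by
    rw [Matrix.mem_unitaryGroup_iff]
    ext i j; fin_cases i <;> fin_cases j <;> simp [Matrix.mul_apply, Matrix.star_apply]
  rw [rowMoment, ← integral_mul_right_unitaryGroup μ hW, rowMoment]
  refine integral_congr_ae (.of_forall fun U => ?_)
  simp [rowMonomial, Matrix.mul_apply]
  ring

theorem rowMoment_eq_zero {a b c d : ℕ} (h : Complex.I ^ a * (-Complex.I) ^ c ≠ 1) :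
    rowMoment μ z a b c d = 0 := by
  have hW : !![Complex.I, 0; 0, 1] ∈ Matrix.unitaryGroup (Fin 2) ℂ := by
    rw [Matrix.mem_unitaryGroup_iff]
    ext i j; fin_cases i <;> fin_cases j <;> simp [Matrix.mul_apply, Matrix.star_apply]
  have key : rowMoment μ z a b c d =
      Complex.I ^ a * (-Complex.I) ^ c * rowMoment μ z a b c d := by
    conv_lhs => rw [rowMoment, ← integral_mul_right_unitaryGroup μ hW]
    rw [rowMoment, ← integral_const_mul]
    refine integral_congr_ae (.of_forall fun U => ?_)
    simp [rowMonomial, Matrix.mul_apply, mul_pow]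
    ring
  have h0 : (Complex.I ^ a * (-Complex.I) ^ c - 1) * rowMoment μ z a b c d = 0 := by
    linear_combination -key
  exact (mul_eq_zero.mp h0).resolve_left (sub_ne_zero.mpr h)

theorem rowMoment_offDiag {a b c d : ℕ} (h : a + b = 3) (h' : c + d = 3) (hac : a ≠ c) :
    rowMoment μ z a b c d = 0 := by
  apply rowMoment_eq_zero
  have ha : a ≤ 3 := by omega
  have hc : c ≤ 3 := by omega
  clear h h'
  interval_cases a <;> interval_cases c <;>
    simp [Complex.ext_iff, pow_succ] at hac ⊢ <;> norm_num

theorem rowMoment_three_eq : rowMoment μ z 3 0 3 0 = 3 * rowMoment μ z 2 1 2 1 := by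
  have hW : !![3 / 5, -(4 / 5); 4 / 5, 3 / 5] ∈ Matrix.unitaryGroup (Fin 2) ℂ := by
    rw [Matrix.mem_unitaryGroup_iff]
    ext i j; fin_cases i <;> fin_cases j <;>
      simp [Matrix.mul_apply, Matrix.star_apply, Complex.conj_ofNat] <;> norm_num
  have hexp : rowMoment μ z 3 0 3 0 = ∑ k ∈ Finset.range 4, ∑ l ∈ Finset.range 4,
      ((Nat.choose 3 k * Nat.choose 3 l * 3 ^ (k + l) * 4 ^ ((3 - k) + (3 - l)) / 5 ^ 6 : ℂ)) *
        rowMoment μ z k (3 - k) l (3 - l) := by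
    conv_lhs => rw [rowMoment, ← integral_mul_right_unitaryGroup μ hW]
    simp only [rowMoment, ← integral_const_mul]
    have hi (k l : ℕ) (q : ℂ) : Integrable (fun U : Matrix.unitaryGroup (Fin 2) ℂ =>
        q * rowMonomial z k (3 - k) l (3 - l) U) μ :=
      (integrable_of_continuous μ (continuous_rowMonomial z _ _ _ _)).const_mul q
    simp_rw [← integral_finsetSum _ fun l _ => hi _ l _]
    rw [← integral_finsetSum _ fun k _ => integrable_finsetSum _ fun l _ => hi k l _]
    refine integral_congr_ae (.of_forall fun U => ?_)
    simp [rowMonomial, Matrix.mul_apply, Finset.sum_range_succ, Nat.choose]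
    ring
  have hs1 := rowMoment_swap μ z 0 3 0 3
  have hs2 := rowMoment_swap μ z 1 2 1 2
  have hz {a b c d : ℕ} := @rowMoment_offDiag μ _ _ z a b c d
  simp [Finset.sum_range_succ, hz, Nat.choose, hs1, hs2] at hexp
  linear_combination (15625 / 10800 : ℂ) * hexp

theorem rowMoment_norm :
    2 * rowMoment μ z 3 0 3 0 + 6 * rowMoment μ z 2 1 2 1 = 1 := by
  have hi (a b c d : ℕ) (q : ℂ) : Integrable (fun U : Matrix.unitaryGroup (Fin 2) ℂ =>
        q * rowMonomial z a b c d U) μ :=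
      (integrable_of_continuous μ (continuous_rowMonomial z _ _ _ _)).const_mul q
  have h1 : ∑ k ∈ Finset.range 4, (Nat.choose 3 k : ℂ) * rowMoment μ z k (3 - k) k (3 - k) = 1 := by
    simp only [rowMoment, ← integral_const_mul]
    rw [← integral_finsetSum _ fun k _ => hi _ _ _ _ _]
    have : ∫ _ : Matrix.unitaryGroup (Fin 2) ℂ, (1 : ℂ) ∂μ = 1 := by simp
    rw [← this]
    refine integral_congr_ae (.of_forall fun U => ?_)
    have hU := congr_fun₂ (Matrix.mem_unitaryGroup_iff.mp U.2) z z
    simp [Matrix.mul_apply, Matrix.star_apply] at hU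
    simp [rowMonomial, Finset.sum_range_succ, Nat.choose]
    have hU3 := congrArg (· ^ 3) hU
    simp only [one_pow] at hU3
    linear_combination hU3
  have hs1 := rowMoment_swap μ z 0 3 0 3
  have hs2 := rowMoment_swap μ z 1 2 1 2
  simp [Finset.sum_range_succ, Nat.choose, hs1, hs2] at h1
  linear_combination h1

end

/-- The number of permutations of the three tensor factors that carry `y` to `x`. -/
def symCount (x y : Fin 3 → Fin 2) : ℕ :=
  (Finset.univ.filter fun σ : Equiv.Perm (Fin 3) => ∀ c, x c = y (σ c)).card

/-- The number of ones in a bitstring of length three. -/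
def hammingWt (x : Fin 3 → Fin 2) : ℕ := ∑ c, (x c : ℕ)

theorem symCount_mul_choose (x y : Fin 3 → Fin 2) :
    symCount x y * Nat.choose 3 (hammingWt x) = if hammingWt x = hammingWt y then 6 else 0 := by
  revert x y
  decide

theorem symCount_comm (x y : Fin 3 → Fin 2) : symCount x y = symCount y x := by
  revert x y
  decide

theorem sum_symCount (x : Fin 3 → Fin 2) : ∑ y, symCount x y = 6 := by
  revert x
  decide

/-- The symmetric projector `sym3` as a real matrix. -/
noncomputable def symReal : Matrix (Fin 3 → Fin 2) (Fin 3 → Fin 2) ℝ :=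
  fun x y => symCount x y / 6

theorem sym3_apply (x y : Fin 3 → Fin 2) : sym3 x y = (symReal x y : ℂ) := by
  simp [sym3, symReal, symCount, permOp3, Matrix.sum_apply, Finset.sum_boole]
  ring

theorem symReal_mem_doublyStochastic : symReal ∈ doublyStochastic ℝ (Fin 3 → Fin 2) := by
  have h (x : Fin 3 → Fin 2) : ∑ y, symReal x y = 1 := by
    simp only [symReal, ← Finset.sum_div, ← Nat.cast_sum, sum_symCount]
    norm_num
  refine mem_doublyStochastic_iff_sum.mpr ⟨fun x y => ?_, h, fun y => ?_⟩
  · unfold symReal; positivity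
  · simpa only [symReal, symCount_comm _ y] using h y

theorem piTensor_mem_doublyStochastic {ι κ : Type*} [Fintype ι] [DecidableEq ι] [Fintype κ]
    [DecidableEq κ] {A : ι → Matrix κ κ ℝ} (hA : ∀ i, A i ∈ doublyStochastic ℝ κ) :
    piTensor A ∈ doublyStochastic ℝ (ι → κ) := by
  simp only [mem_doublyStochastic_iff_sum] at hA ⊢
  refine ⟨fun x y => Finset.prod_nonneg fun i _ => (hA i).1 _ _, fun x => ?_, fun y => ?_⟩
  · simp only [piTensor, ← Fintype.prod_sum (fun i b => A i (x i) b), (hA _).2.1,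
      Finset.prod_const_one]
  · simp only [piTensor, ← Fintype.prod_sum (fun i a => A i a (y i)), (hA _).2.2,
      Finset.prod_const_one]

theorem submatrix_mem_doublyStochastic {m n : Type*} [Fintype m] [DecidableEq m] [Fintype n]
    [DecidableEq n] {A : Matrix n n ℝ} (hA : A ∈ doublyStochastic ℝ n) (e : m ≃ n) :
    A.submatrix e e ∈ doublyStochastic ℝ m := by
  rw [mem_doublyStochastic_iff_sum] at hA ⊢
  exact ⟨fun _ _ => hA.1 _ _, fun x => (e.sum_comp (A (e x))).trans (hA.2.1 _),
    fun y => (e.sum_comp (fun x => A x (e y))).trans (hA.2.2 _)⟩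

theorem re_sum_le_of_doublyStochastic {X : Type*} [Fintype X] [DecidableEq X] {K : Matrix X X ℝ}
    (hK : K ∈ doublyStochastic ℝ X) (Ψ : X → ℂ) :
    (∑ x, ∑ y, Ψ x * star (Ψ y) * (K y x : ℂ)).re ≤ ∑ x, ‖Ψ x‖ ^ 2 := by
  rw [mem_doublyStochastic_iff_sum] at hK
  obtain ⟨h0, hr, hc⟩ := hK
  have hle (x y : X) : (Ψ x * star (Ψ y) * (K y x : ℂ)).re ≤
      K y x * (‖Ψ x‖ ^ 2 / 2) + K y x * (‖Ψ y‖ ^ 2 / 2) := by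
    rw [Complex.re_mul_ofReal, ← mul_add, mul_comm]
    refine mul_le_mul_of_nonneg_left ?_ (h0 y x)
    have h1 := Complex.re_le_norm (Ψ x * star (Ψ y))
    rw [norm_mul, norm_star] at h1
    nlinarith [sq_nonneg (‖Ψ x‖ - ‖Ψ y‖)]
  calc (∑ x, ∑ y, Ψ x * star (Ψ y) * (K y x : ℂ)).re
      = ∑ x, ∑ y, (Ψ x * star (Ψ y) * (K y x : ℂ)).re := by simp only [Complex.re_sum]
    _ ≤ ∑ x, ∑ y, (K y x * (‖Ψ x‖ ^ 2 / 2) + K y x * (‖Ψ y‖ ^ 2 / 2)) :=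
      Finset.sum_le_sum fun x _ => Finset.sum_le_sum fun y _ => hle x y
    _ = ∑ x, ‖Ψ x‖ ^ 2 := by
      simp only [Finset.sum_add_distrib]
      rw [Finset.sum_comm (f := fun x y => K y x * (‖Ψ y‖ ^ 2 / 2))]
      simp only [← Finset.sum_mul, hr, hc, ← Finset.sum_add_distrib]
      exact Finset.sum_congr rfl fun x _ => by ring

theorem symAt3_eq_piTensor {n : ℕ} (i : Fin n) :
    symAt3 i = (piTensor (Function.update (fun _ => 1) i sym3)).submatrix
      (Equiv.piComm fun _ _ => Fin 2) (Equiv.piComm fun _ _ => Fin 2) := by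
  ext x y
  simp only [symAt3, Matrix.submatrix_apply, piTensor]
  split_ifs with h
  · rw [Finset.prod_eq_single i]
    · simp; rfl
    · intro j _ hj
      rw [Function.update_of_ne hj, Matrix.one_apply, if_pos]
      exact funext fun c => h c j hj
    · simp
  · push Not at h
    obtain ⟨c, j, hj, hne⟩ := h
    refine (Finset.prod_eq_zero (Finset.mem_univ j) ?_).symm
    rw [Function.update_of_ne hj, Matrix.one_apply, if_neg]
    exact fun h => hne (congrFun h c)

theorem prod_symAt3_eq_piTensor {n : ℕ} (l : List (Fin n)) (hl : l.Nodup) :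
    (l.map fun i => symAt3 i).prod = (piTensor fun i => if i ∈ l then sym3 else 1).submatrix
      (Equiv.piComm fun _ _ => Fin 2) (Equiv.piComm fun _ _ => Fin 2) := by
  induction l with
  | nil => simp [piTensor_one]
  | cons i l ih =>
    obtain ⟨hi, hl⟩ := List.nodup_cons.mp hl
    rw [List.map_cons, List.prod_cons, ih hl, symAt3_eq_piTensor, Matrix.submatrix_mul_equiv,
      piTensor_mul]
    congr 2
    funext j
    by_cases hj : j = i
    · subst hj; simp [hi]
    · simp [hj]

theorem prodSym3_apply {n : ℕ} (S : Finset (Fin n)) (x y : Fin 3 → Fin n → Fin 2) :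
    prodSym3 S x y = ∏ i, (if i ∈ S then sym3 else 1) (fun c => x c i) (fun c => y c i) := by
  rw [prodSym3, prod_symAt3_eq_piTensor _ (S.sort_nodup _)]
  simp only [Finset.mem_sort]
  rfl

theorem exists_doublyStochastic_prodSym3 {n : ℕ} (S : Finset (Fin n)) :
    ∃ K ∈ doublyStochastic ℝ (Fin 3 → Fin n → Fin 2), ∀ x y, prodSym3 S x y = (K x y : ℂ) := by
  refine ⟨_, submatrix_mem_doublyStochastic (piTensor_mem_doublyStochastic
    (A := fun i => if i ∈ S then symReal else 1) fun i => ?_) (Equiv.piComm fun _ _ => Fin 2),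
    fun x y => ?_⟩
  · split_ifs
    exacts [symReal_mem_doublyStochastic, one_mem _]
  · rw [prodSym3_apply, Matrix.submatrix_apply, piTensor, Complex.ofReal_prod]
    refine Finset.prod_congr rfl fun i _ => ?_
    split_ifs
    · exact sym3_apply _ _
    · rw [Matrix.one_apply, Matrix.one_apply]
      simp [funext_iff, Function.swap, apply_ite]

theorem rho3_vecMulVec {n : ℕ} (ψ : (Fin n → Fin 2) → ℂ) (x y : Fin 3 → Fin n → Fin 2) :
    rho3 (Matrix.vecMulVec ψ (star ψ)) x y = (∏ c, ψ (x c)) * star (∏ c, ψ (y c)) := by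
  simp [rho3, Matrix.vecMulVec_apply, Finset.prod_mul_distrib]

theorem re_trace_rho3_mul_prodSym3_le {n : ℕ} (ψ : (Fin n → Fin 2) → ℂ)
    (hψ : (∑ x, star (ψ x) * ψ x) = 1) (S : Finset (Fin n)) :
    (Matrix.trace (rho3 (Matrix.vecMulVec ψ (star ψ)) * prodSym3 S)).re ≤ 1 := by
  obtain ⟨K, hK, hKS⟩ := exists_doublyStochastic_prodSym3 S
  have hψ' : ∑ x, ‖ψ x‖ ^ 2 = 1 := by
    have h := congrArg Complex.re hψ
    simpa [Complex.star_def, Complex.conj_mul', ← Complex.ofReal_pow] using h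
  have h := re_sum_le_of_doublyStochastic hK fun x => ∏ c, ψ (x c)
  simp only [norm_prod, ← Finset.prod_pow] at h
  rw [← Fintype.sum_pow (fun x => ‖ψ x‖ ^ 2), hψ', one_pow] at h
  simpa only [Matrix.trace, Matrix.diag_apply, Matrix.mul_apply, rho3_vecMulVec, hKS] using h

theorem prod_eq_pow_mul_pow (f : Fin 2 → ℂ) (x : Fin 3 → Fin 2) :
    ∏ c, f (x c) = f 0 ^ (3 - hammingWt x) * f 1 ^ hammingWt x := by
  rw [Fin.prod_univ_three, hammingWt, Fin.sum_univ_three]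
  generalize x 0 = a, x 1 = b, x 2 = c
  fin_cases a <;> fin_cases b <;> fin_cases c <;>
    simp [-mul_eq_mul_left_iff, -mul_eq_mul_right_iff] <;> ring

theorem hammingWt_le (x : Fin 3 → Fin 2) : hammingWt x ≤ 3 := by
  revert x
  decide

theorem integral_row_prod (μ : Measure (Matrix.unitaryGroup (Fin 2) ℂ)) [μ.IsHaarMeasure]
    [IsProbabilityMeasure μ] (z : Fin 2) (x y : Fin 3 → Fin 2) :
    ∫ U : Matrix.unitaryGroup (Fin 2) ℂ, ∏ c, (star ((U : Matrix (Fin 2) (Fin 2) ℂ) z (x c)) *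
      (U : Matrix (Fin 2) (Fin 2) ℂ) z (y c)) ∂μ = 1 / 4 * sym3 x y := by
  have hmom : ∫ U : Matrix.unitaryGroup (Fin 2) ℂ,
      ∏ c, (star ((U : Matrix (Fin 2) (Fin 2) ℂ) z (x c)) *
        (U : Matrix (Fin 2) (Fin 2) ℂ) z (y c)) ∂μ =
      rowMoment μ z (3 - hammingWt y) (hammingWt y) (3 - hammingWt x) (hammingWt x) := by
    refine integral_congr_ae (.of_forall fun U => ?_)
    simp only [Finset.prod_mul_distrib, rowMonomial]
    rw [prod_eq_pow_mul_pow (fun j => star ((U : Matrix (Fin 2) (Fin 2) ℂ) z j)),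
      prod_eq_pow_mul_pow (fun j => (U : Matrix (Fin 2) (Fin 2) ℂ) z j), mul_comm]
  have hx := hammingWt_le x
  have hy := hammingWt_le y
  have hcount := symCount_mul_choose x y
  rw [hmom, sym3_apply, symReal]
  have h1 := rowMoment_three_eq μ z
  have h2 := rowMoment_norm μ z
  have hB : rowMoment μ z 2 1 2 1 = 1 / 12 := by linear_combination (h2 - 2 * h1) / 12
  rw [hB] at h1
  split_ifs at hcount with h
  · rw [← h]
    generalize symCount x y = N at hcount ⊢
    generalize hammingWt x = k at hx hcount ⊢
    interval_cases k <;> norm_num [Nat.choose] at hcount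
    · simp [hcount, h1]; norm_num
    · obtain rfl : N = 2 := by omega
      simp [hB]; norm_num
    · obtain rfl : N = 2 := by omega
      rw [rowMoment_swap]
      simp [hB]; norm_num
    · rw [rowMoment_swap]
      simp [hcount, h1]; norm_num
  · have hN : symCount x y = 0 :=
      (mul_eq_zero.mp hcount).resolve_right (Nat.choose_pos hx).ne'
    rw [hN, rowMoment_offDiag μ z (by omega) (by omega) (by omega)]
    simp

theorem prod_dite_mem {ι M : Type*} [Fintype ι] [DecidableEq ι] [CommMonoid M] (S : Finset ι)
    (f : {i // i ∈ S} → M) (g : ι → M) :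
    ∏ i, (if h : i ∈ S then f ⟨i, h⟩ else g i) =
      (∏ i : {i // i ∈ S}, f i) * ∏ i : {i // i ∉ S}, g i := by
  rw [Fintype.prod_dite]
  congr!

/-- The local factor at qubit `i` of the measurement effect `U† |z⟩⟨z| U`. -/
noncomputable def bornKernel {n : ℕ} (S : Finset (Fin n))
    (V : {i : Fin n // i ∈ S} → Matrix.unitaryGroup (Fin 2) ℂ)
    (z : {i : Fin n // i ∈ S} → Fin 2) (i : Fin n) : Matrix (Fin 2) (Fin 2) ℂ :=
  if h : i ∈ S then
    Matrix.of fun a b => star ((V ⟨i, h⟩ : Matrix (Fin 2) (Fin 2) ℂ) (z ⟨i, h⟩) a) *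
      (V ⟨i, h⟩ : Matrix (Fin 2) (Fin 2) ℂ) (z ⟨i, h⟩) b
  else 1

section
variable {n : ℕ} (S : Finset (Fin n))

theorem localOp_eq_piTensor (A : {i : Fin n // i ∈ S} → Matrix (Fin 2) (Fin 2) ℂ) :
    localOp S A = piTensor fun i => if h : i ∈ S then A ⟨i, h⟩ else 1 := by
  ext x y
  refine Finset.prod_congr rfl fun i _ => ?_
  by_cases h : i ∈ S <;> simp [h, Matrix.one_apply]

theorem projZ_eq_piTensor (z : {i : Fin n // i ∈ S} → Fin 2) :
    projZ S z = piTensor fun i =>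
      if h : i ∈ S then Matrix.single (z ⟨i, h⟩) (z ⟨i, h⟩) 1 else 1 := by
  ext x y
  refine Finset.prod_congr rfl fun i _ => ?_
  by_cases h : i ∈ S
  · simp [h, Matrix.single_apply, eq_comm]
  · simp [h, Matrix.one_apply]

variable (V : {i : Fin n // i ∈ S} → Matrix.unitaryGroup (Fin 2) ℂ)
  (z : {i : Fin n // i ∈ S} → Fin 2)

theorem trace_born_eq (ρ : QMat n) :
    Matrix.trace (localOp S (fun i => (V i : Matrix (Fin 2) (Fin 2) ℂ)) * ρ *
      (localOp S (fun i => (V i : Matrix (Fin 2) (Fin 2) ℂ)))ᴴ * projZ S z) =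
    Matrix.trace (ρ * piTensor (bornKernel S V z)) := by
  have hk : (localOp S (fun i => (V i : Matrix (Fin 2) (Fin 2) ℂ)))ᴴ * projZ S z *
      localOp S (fun i => (V i : Matrix (Fin 2) (Fin 2) ℂ)) = piTensor (bornKernel S V z) := by
    rw [localOp_eq_piTensor, projZ_eq_piTensor, piTensor_conjTranspose, piTensor_mul,
      piTensor_mul]
    congr 1
    funext i
    by_cases h : i ∈ S
    · ext a b
      simp [h, bornKernel, Matrix.mul_apply, Matrix.single_apply, Finset.sum_ite_eq, ite_and]
    · simp [h, bornKernel]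
  rw [← hk, Matrix.mul_assoc, Matrix.mul_assoc, Matrix.trace_mul_comm]
  simp only [Matrix.mul_assoc]

theorem bornKernel_conjTranspose (i : Fin n) : (bornKernel S V z i)ᴴ = bornKernel S V z i := by
  by_cases h : i ∈ S
  · ext a b
    simp [h, bornKernel, Matrix.conjTranspose_apply, mul_comm]
  · simp [h, bornKernel]

theorem ofReal_born {ρ : QMat n} (hρ : ρ.IsHermitian) :
    (born ρ S V z : ℂ) = Matrix.trace (ρ * piTensor (bornKernel S V z)) := by
  rw [born, trace_born_eq]
  refine Complex.conj_eq_iff_re.mp ?_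
  rw [← Complex.star_def, ← Matrix.trace_conjTranspose, Matrix.conjTranspose_mul,
    piTensor_conjTranspose, hρ.eq, Matrix.trace_mul_comm]
  simp only [bornKernel_conjTranspose]

theorem ofReal_born_pow_three {ρ : QMat n} (hρ : ρ.IsHermitian) :
    ((born ρ S V z ^ 3 : ℝ) : ℂ) = ∑ x, ∑ y, rho3 ρ x y *
      ∏ i, ∏ c, bornKernel S V z i (y c i) (x c i) := by
  rw [Complex.ofReal_pow, ofReal_born S V z hρ]
  simp only [Matrix.trace, Matrix.diag_apply, Matrix.mul_apply]
  rw [← Fintype.sum_prod_type', Fintype.sum_pow,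
    ← (Equiv.arrowProdEquivProdArrow (Fin 3) _ _).symm.sum_comp, Fintype.sum_prod_type]
  refine Finset.sum_congr rfl fun x _ => Finset.sum_congr rfl fun y _ => ?_
  simp only [rho3, piTensor, Finset.prod_mul_distrib, Equiv.arrowProdEquivProdArrow_symm_apply]
  rw [Finset.prod_comm]

theorem prod_bornKernel (x y : Fin 3 → Fin n → Fin 2) :
    ∏ i, ∏ c, bornKernel S V z i (x c i) (y c i) =
      (∏ i : {i // i ∈ S}, ∏ c, (star ((V i : Matrix (Fin 2) (Fin 2) ℂ) (z i) (x c i)) *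
        (V i : Matrix (Fin 2) (Fin 2) ℂ) (z i) (y c i))) *
      ∏ i : {i // i ∉ S}, ∏ c, (1 : Matrix (Fin 2) (Fin 2) ℂ) (x c i) (y c i) := by
  refine Eq.trans ?_ (prod_dite_mem S
    (fun i => ∏ c, (star ((V i : Matrix (Fin 2) (Fin 2) ℂ) (z i) (x c i)) *
      (V i : Matrix (Fin 2) (Fin 2) ℂ) (z i) (y c i)))
    (fun i => ∏ c, (1 : Matrix (Fin 2) (Fin 2) ℂ) (x c i) (y c i)))
  refine Finset.prod_congr rfl fun i _ => ?_
  by_cases h : i ∈ S <;> simp [h, bornKernel]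

variable (μ : Measure (Matrix.unitaryGroup (Fin 2) ℂ)) [IsProbabilityMeasure μ]

theorem integrable_prod_bornKernel (x y : Fin 3 → Fin n → Fin 2) :
    Integrable (fun V => ∏ i, ∏ c, bornKernel S V z i (x c i) (y c i))
      (Measure.pi fun _ : {i : Fin n // i ∈ S} => μ) := by
  simp only [prod_bornKernel]
  refine Integrable.mul_const (Integrable.fintype_prod (f := fun (i : {i // i ∈ S})
    (U : Matrix.unitaryGroup (Fin 2) ℂ) => ∏ c,
      (star ((U : Matrix (Fin 2) (Fin 2) ℂ) (z i) (x c i)) *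
        (U : Matrix (Fin 2) (Fin 2) ℂ) (z i) (y c i))) fun i => ?_) _
  have h (j : Fin 2) : Continuous fun U : Matrix.unitaryGroup (Fin 2) ℂ =>
      (U : Matrix (Fin 2) (Fin 2) ℂ) (z i) j :=
    continuous_subtype_val.matrix_elem (z i) j
  exact integrable_of_continuous μ
    (continuous_finsetProd _ fun c _ => (h (x c i)).star.mul (h (y c i)))

theorem integral_prod_bornKernel [μ.IsHaarMeasure] (x y : Fin 3 → Fin n → Fin 2) :
    ∫ V, ∏ i, ∏ c, bornKernel S V z i (x c i) (y c i)
      ∂(Measure.pi fun _ : {i : Fin n // i ∈ S} => μ) =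
      (1 / 4) ^ S.card * prodSym3 S x y := by
  simp only [prod_bornKernel]
  rw [integral_mul_const, integral_fintype_prod_eq_prod (fun (i : {i // i ∈ S})
    (U : Matrix.unitaryGroup (Fin 2) ℂ) => ∏ c,
      (star ((U : Matrix (Fin 2) (Fin 2) ℂ) (z i) (x c i)) *
        (U : Matrix (Fin 2) (Fin 2) ℂ) (z i) (y c i)))]
  have h (i : {i // i ∈ S}) := integral_row_prod μ (z i) (fun c => x c i) (fun c => y c i)
  rw [Finset.prod_congr rfl fun i _ => h i, Finset.prod_mul_distrib, Finset.prod_const,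
    Finset.card_univ, Fintype.card_coe, mul_assoc, prodSym3_apply]
  congr 1
  have h1 (i : Fin n) : ∏ c, (1 : Matrix (Fin 2) (Fin 2) ℂ) (x c i) (y c i) =
      (1 : Matrix (Fin 3 → Fin 2) (Fin 3 → Fin 2) ℂ) (fun c => x c i) (fun c => y c i) := by
    simp only [Matrix.one_apply, Fintype.prod_ite_zero, Finset.prod_const_one, funext_iff]
  simp only [h1]
  refine (prod_dite_mem S (fun i => sym3 (fun c => x c i) (fun c => y c i))
    (fun i => (1 : Matrix (Fin 3 → Fin 2) (Fin 3 → Fin 2) ℂ) (fun c => x c i)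
      (fun c => y c i))).symm.trans ?_
  refine Finset.prod_congr rfl fun i _ => ?_
  split_ifs <;> rfl

theorem integral_born_pow_three [μ.IsHaarMeasure] {ρ : QMat n} (hρ : ρ.IsHermitian) :
    ∫ V, born ρ S V z ^ 3 ∂(Measure.pi fun _ : {i : Fin n // i ∈ S} => μ) =
      (1 / 4 : ℝ) ^ S.card * (Matrix.trace (rho3 ρ * prodSym3 S)).re := by
  have hint (x y : Fin 3 → Fin n → Fin 2) :=
    (integrable_prod_bornKernel S z μ y x).const_mul (rho3 ρ x y)
  have h : ((∫ V, born ρ S V z ^ 3 ∂(Measure.pi fun _ : {i : Fin n // i ∈ S} => μ) : ℝ) : ℂ) =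
      (1 / 4 : ℝ) ^ S.card * Matrix.trace (rho3 ρ * prodSym3 S) := by
    rw [← integral_complex_ofReal]
    simp only [ofReal_born_pow_three S _ z hρ]
    rw [integral_finsetSum _ fun x _ => integrable_finsetSum _ fun y _ => hint x y]
    simp only [integral_finsetSum _ fun y _ => hint _ y, integral_const_mul,
      integral_prod_bornKernel, Matrix.trace, Matrix.diag_apply, Matrix.mul_apply,
      Finset.mul_sum]
    refine Finset.sum_congr rfl fun x _ => Finset.sum_congr rfl fun y _ => ?_
    push_cast
    ring
  have h' := congrArg Complex.re h
  rwa [Complex.ofReal_re, ← Complex.ofReal_pow, Complex.re_ofReal_mul] at h'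

end

/-- **Third moment of the LRM outcome probability**: for any fixed bitstring `z`,
`𝔼_U[P_U(z)³] = 4^{-s} tr(ρ^{⊗3} ∏_{i∈S} Π_{sym,3}^i) ≤ 4^{-s}`, and consequently
`∑_z 𝔼_U[P_U(z)³] ≤ 2^{-s}`. -/
theorem LRM_third_moment (n : ℕ) (ψ : (Fin n → Fin 2) → ℂ)
    (hψ : (∑ x, star (ψ x) * ψ x) = 1)
    (S : Finset (Fin n)) (hS : S.Nonempty) (z : {i : Fin n // i ∈ S} → Fin 2)
    (μ : Measure (Matrix.unitaryGroup (Fin 2) ℂ)) [μ.IsHaarMeasure] [IsProbabilityMeasure μ] :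
    (∫ V : ({i : Fin n // i ∈ S} → Matrix.unitaryGroup (Fin 2) ℂ),
        (born (Matrix.vecMulVec ψ (star ψ)) S V z) ^ 3
        ∂(Measure.pi fun _ : {i : Fin n // i ∈ S} => μ))
      = (1 / 4 : ℝ) ^ S.card *
          (Matrix.trace (rho3 (Matrix.vecMulVec ψ (star ψ)) * prodSym3 S)).re ∧
    (∫ V : ({i : Fin n // i ∈ S} → Matrix.unitaryGroup (Fin 2) ℂ),
        (born (Matrix.vecMulVec ψ (star ψ)) S V z) ^ 3
        ∂(Measure.pi fun _ : {i : Fin n // i ∈ S} => μ))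
      ≤ (1 / 4 : ℝ) ^ S.card ∧
    (∑ z' : ({i : Fin n // i ∈ S} → Fin 2),
        ∫ V : ({i : Fin n // i ∈ S} → Matrix.unitaryGroup (Fin 2) ℂ),
          (born (Matrix.vecMulVec ψ (star ψ)) S V z') ^ 3
          ∂(Measure.pi fun _ : {i : Fin n // i ∈ S} => μ))
      ≤ (1 / 2 : ℝ) ^ S.card := by
  have hρ : (Matrix.vecMulVec ψ (star ψ)).IsHermitian := by
    ext x y
    simp [Matrix.vecMulVec_apply, mul_comm]
  have hle (z' : {i : Fin n // i ∈ S} → Fin 2) :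
      ∫ V, born (Matrix.vecMulVec ψ (star ψ)) S V z' ^ 3
        ∂(Measure.pi fun _ : {i : Fin n // i ∈ S} => μ) ≤ (1 / 4 : ℝ) ^ S.card := by
    rw [integral_born_pow_three S z' μ hρ]
    exact mul_le_of_le_one_right (by positivity) (re_trace_rho3_mul_prodSym3_le ψ hψ S)
  refine ⟨integral_born_pow_three S z μ hρ, hle z, (Finset.sum_le_sum fun z' _ => hle z').trans ?_⟩
  simp only [Finset.sum_const, Finset.card_univ, Fintype.card_fun, Fintype.card_fin,
    Fintype.card_coe, nsmul_eq_mul, Nat.cast_pow, Nat.cast_ofNat, ← mul_pow]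
  norm_num
end

section
/- Let φ̃_i = φ_i/√2 (i = 1,…,4) be the single-qubit SIC-POVM vectors with φ₁ = (1,0), φ₂ = (1/√3, √(2/3)), φ₃ = (1/√3, √(2/3)e^{i2π/3}), φ₄ = (1/√3, √(2/3)e^{i4π/3}), and define φ̃₁⊥ = (0, 1/√2), φ̃₂⊥ = (1/√3, −1/√6), φ̃₃⊥ = (e^{−i2π/3}/√3, −1/√6), φ̃₄⊥ = (e^{−i4π/3}/√3, −1/√6). Define u_i = φ̃_i ⊕ φ̃_i⊥ ∈ C⁴ (the first two coordinates of u_i are those of φ̃_i and the last two are those of φ̃_i⊥). Then: (i) {u₁, u₂, u₃, u₄} is an orthonormal basis of C⁴; and (ii) for every 2-by-2 complex matrix ρ, tr( (ρ ⊕ 0) · |u_i⟩⟨u_i| ) = tr( ρ · |φ̃_i⟩⟨φ̃_i| ) for all i, where ρ ⊕ 0 is the 4-by-4 block matrix with ρ in the top-left 2-by-2 block and zeros elsewhere (Neumark dilation of the single-qubit SIC-POVM). -/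
open Matrix MeasureTheory
open scoped BigOperators ComplexConjugate Kronecker

/-- The four SIC vectors `φ₁, …, φ₄` in `ℂ²`. -/
noncomputable def sicVec : Fin 4 → Fin 2 → ℂ :=
  ![![1, 0],
    ![((1 / Real.sqrt 3 : ℝ) : ℂ), ((Real.sqrt (2/3) : ℝ) : ℂ)],
    ![((1 / Real.sqrt 3 : ℝ) : ℂ),
      ((Real.sqrt (2/3) : ℝ) : ℂ) * Complex.exp (2 * Real.pi * Complex.I / 3)],
    ![((1 / Real.sqrt 3 : ℝ) : ℂ),
      ((Real.sqrt (2/3) : ℝ) : ℂ) * Complex.exp (4 * Real.pi * Complex.I / 3)]]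

/-- The rescaled SIC-POVM vectors `φ̃ᵢ = φᵢ/√2`. -/
noncomputable def sicTilde (i : Fin 4) : Fin 2 → ℂ :=
  fun a => sicVec i a / ((Real.sqrt 2 : ℝ) : ℂ)

/-- The vectors `φ̃ᵢ^⊥` completing the rescaled SIC vectors to an orthonormal basis. -/
noncomputable def sicPerp : Fin 4 → Fin 2 → ℂ :=
  ![![0, ((1 / Real.sqrt 2 : ℝ) : ℂ)],
    ![((1 / Real.sqrt 3 : ℝ) : ℂ), (-(1 / Real.sqrt 6 : ℝ) : ℂ)],
    ![Complex.exp (-(2 * Real.pi * Complex.I / 3)) / ((Real.sqrt 3 : ℝ) : ℂ),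
      (-(1 / Real.sqrt 6 : ℝ) : ℂ)],
    ![Complex.exp (-(4 * Real.pi * Complex.I / 3)) / ((Real.sqrt 3 : ℝ) : ℂ),
      (-(1 / Real.sqrt 6 : ℝ) : ℂ)]]

/-- The Neumark vectors `uᵢ = φ̃ᵢ ⊕ φ̃ᵢ^⊥ ∈ ℂ² ⊕ ℂ² ≅ ℂ⁴`. -/
noncomputable def neumarkU (i : Fin 4) : (Fin 2 ⊕ Fin 2) → ℂ :=
  Sum.elim (sicTilde i) (sicPerp i)

/-- The primitive cube root of unity `exp (2πi/3)` satisfies `ω² + ω + 1 = 0`. -/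
theorem exp_two_pi_I_div_three_sq_add :
    Complex.exp (2 * Real.pi * Complex.I / 3) ^ 2 + Complex.exp (2 * Real.pi * Complex.I / 3) + 1
      = 0 := by
  have h := (Complex.isPrimitiveRoot_exp 3 (by norm_num)).geom_sum_eq_zero (by norm_num)
  simp only [Finset.sum_range_succ, Finset.sum_range_zero] at h
  push_cast at h
  linear_combination h

theorem exp_four_pi_I_div_three :
    Complex.exp (4 * Real.pi * Complex.I / 3) = Complex.exp (2 * Real.pi * Complex.I / 3) ^ 2 := by
  rw [← Complex.exp_nat_mul]
  congr 1
  push_cast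
  ring

theorem exp_neg_two_pi_I_div_three :
    Complex.exp (-(2 * Real.pi * Complex.I / 3))
      = Complex.exp (2 * Real.pi * Complex.I / 3) ^ 2 := by
  rw [← Complex.exp_nat_mul, ← Complex.exp_periodic]
  congr 1
  push_cast
  ring

theorem exp_neg_four_pi_I_div_three :
    Complex.exp (-(4 * Real.pi * Complex.I / 3)) = Complex.exp (2 * Real.pi * Complex.I / 3) := by
  rw [← Complex.exp_periodic]
  congr 1
  ring

theorem star_exp_two_pi_I_div_three :
    star (Complex.exp (2 * Real.pi * Complex.I / 3))
      = Complex.exp (2 * Real.pi * Complex.I / 3) ^ 2 := by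
  rw [← exp_neg_two_pi_I_div_three, Complex.star_def, ← Complex.exp_conj]
  congr 1
  simp [map_ofNat]
  ring

/-- The coordinates of the Neumark vectors in terms of `1/√2`, `1/√3` and `ω = exp (2πi/3)`. -/
theorem neumarkU_eq {p q w : ℂ} (hp : p = ((Real.sqrt 2)⁻¹ : ℝ)) (hq : q = ((Real.sqrt 3)⁻¹ : ℝ))
    (hw : w = Complex.exp (2 * Real.pi * Complex.I / 3)) :
    neumarkU =
      ![Sum.elim ![p, 0] ![0, p],
        Sum.elim ![p * q, q] ![q, -(p * q)],
        Sum.elim ![p * q, q * w] ![q * w ^ 2, -(p * q)],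
        Sum.elim ![p * q, q * w ^ 2] ![q * w, -(p * q)]] := by
  subst hp hq hw
  have h6 : Real.sqrt 6 = Real.sqrt 2 * Real.sqrt 3 := by
    rw [← Real.sqrt_mul (by norm_num)]; norm_num
  have h23 : Real.sqrt (2 / 3) = Real.sqrt 2 / Real.sqrt 3 := Real.sqrt_div (by norm_num) 3
  have h2 : ((Real.sqrt 2 : ℝ) : ℂ) ≠ 0 := by simp
  have h3 : ((Real.sqrt 3 : ℝ) : ℂ) ≠ 0 := by simp
  funext i a
  fin_cases i <;> rcases a with a | a <;> fin_cases a <;>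
    simp [neumarkU, sicTilde, sicVec, sicPerp, h6, h23, exp_four_pi_I_div_three,
      exp_neg_two_pi_I_div_three, exp_neg_four_pi_I_div_three] <;> field_simp

theorem neumarkU_orthonormal (i j : Fin 4) :
    ∑ a : Fin 2 ⊕ Fin 2, star (neumarkU i a) * neumarkU j a = if i = j then 1 else 0 := by
  obtain ⟨p, hp⟩ : ∃ p : ℂ, p = ((Real.sqrt 2)⁻¹ : ℝ) := ⟨_, rfl⟩
  obtain ⟨q, hq⟩ : ∃ q : ℂ, q = ((Real.sqrt 3)⁻¹ : ℝ) := ⟨_, rfl⟩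
  obtain ⟨w, hw⟩ : ∃ w : ℂ, w = Complex.exp (2 * Real.pi * Complex.I / 3) := ⟨_, rfl⟩
  have hp2 : 2 * p ^ 2 = 1 := by
    rw [hp, ← Complex.ofReal_pow, inv_pow, Real.sq_sqrt (by norm_num)]; norm_num
  have hq2 : 3 * q ^ 2 = 1 := by
    rw [hq, ← Complex.ofReal_pow, inv_pow, Real.sq_sqrt (by norm_num)]; norm_num
  have hw1 : w ^ 2 + w + 1 = 0 := hw ▸ exp_two_pi_I_div_three_sq_add
  have hps : (starRingEnd ℂ) p = p := by rw [hp, Complex.conj_ofReal]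
  have hqs : (starRingEnd ℂ) q = q := by rw [hq, Complex.conj_ofReal]
  have hws : (starRingEnd ℂ) w = w ^ 2 := by rw [hw]; exact star_exp_two_pi_I_div_three
  rw [neumarkU_eq hp hq hw]
  fin_cases i <;> fin_cases j <;>
    simp [Fintype.sum_sum_type, Fin.sum_univ_two, hps, hqs, hws] <;> grind

/-- **Neumark dilation of the single-qubit SIC-POVM**: the vectors `uᵢ = φ̃ᵢ ⊕ φ̃ᵢ^⊥` form an
orthonormal basis of `ℂ⁴`, and the projective measurement `{|uᵢ⟩⟨uᵢ|}` on `ℂ⁴` reproduces the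
SIC-POVM statistics: `tr((ρ ⊕ 0)|uᵢ⟩⟨uᵢ|) = tr(ρ|φ̃ᵢ⟩⟨φ̃ᵢ|)` for every 2×2 matrix `ρ`. -/
theorem neumark_dilation_SIC :
    (∀ i j : Fin 4, (∑ a : Fin 2 ⊕ Fin 2, star (neumarkU i a) * neumarkU j a)
        = if i = j then 1 else 0) ∧
    (∀ ρ : Matrix (Fin 2) (Fin 2) ℂ, ∀ i : Fin 4,
      Matrix.trace (Matrix.fromBlocks ρ 0 0 0 *
          Matrix.vecMulVec (neumarkU i) (star (neumarkU i)))
        = Matrix.trace (ρ * Matrix.vecMulVec (sicTilde i) (star (sicTilde i)))) := by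
  refine ⟨neumarkU_orthonormal, fun ρ i => ?_⟩
  simp [Matrix.trace, Matrix.mul_apply, Matrix.vecMulVec_apply, Fintype.sum_sum_type, neumarkU]
end
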